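/- Impossibility of the third alternative in the stopping time argument (Section 6, Case 3): Let u be a weak solution to the parabolic double-phase system. Let z ∈ Ω_T, λ ≥ 1 and ρ > 0 be such that Q_ρ^λ(z) ⊂ Ω_T and ⨍⨍_{Q_ρ^λ(z)} (|∇u|^p + a(w)|∇u|^q + |F|^p + a(w)|F|^q) dw = λ^p. If moreover a(z) ≤ 2[a]_α(10ρ)^α, then K λ^p > a(z) λ^q; equivalently, the two conditions K λ^p ≤ a(z) λ^q and a(z) ≤ 2[a]_α(10ρ)^α cannot hold simultaneously. -/

import Mathlib

noncomputable section

open MeasureTheory Set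
open scoped ENNReal RealInnerProductSpace Topology

namespace DoublePhase

abbrev Rn (n : ℕ) : Type := EuclideanSpace ℝ (Fin n)
abbrev RN (N : ℕ) : Type := EuclideanSpace ℝ (Fin N)
abbrev RNn (N n : ℕ) : Type := EuclideanSpace ℝ (Fin N × Fin n)

variable {n N : ℕ}

/-- Time derivative of a space-time test function. -/
def timeDeriv (φ : Rn n × ℝ → RN N) (z : Rn n × ℝ) : RN N :=
  (EuclideanSpace.equiv (Fin N) ℝ).symm fun i => deriv (fun s => φ (z.1, s) i) z.2

/-- Spatial gradient of a space-time test function, as an `ℝ^{Nn}`-valued map. -/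
def spaceGrad (φ : Rn n × ℝ → RN N) (z : Rn n × ℝ) : RNn N n :=
  (EuclideanSpace.equiv (Fin N × Fin n) ℝ).symm fun ij =>
    fderiv ℝ (fun x => φ (x, z.2) ij.1) z.1 (EuclideanSpace.single ij.2 1)

/-- The standard parabolic cylinder `Q_r(z₀) = B_r(x₀) × (t₀ - r², t₀ + r²)`. -/
def Qcyl (z₀ : Rn n × ℝ) (r : ℝ) : Set (Rn n × ℝ) :=
  Metric.ball z₀.1 r ×ˢ Ioo (z₀.2 - r ^ 2) (z₀.2 + r ^ 2)

/-- The cylinder `Q_{R,S}(z₀) = B_R(x₀) × (t₀ - S, t₀ + S)`. -/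
def QRS (z₀ : Rn n × ℝ) (R S' : ℝ) : Set (Rn n × ℝ) :=
  Metric.ball z₀.1 R ×ˢ Ioo (z₀.2 - S') (z₀.2 + S')

/-- Weak solution to the parabolic double-phase system
`u_t - div 𝒜(z, ∇u) = - div (|F|^{p-2} F + a(z) |F|^{q-2} F)` in `Ω_T = Ω × (0,T)`.
Here `du` denotes the (weak) spatial gradient `∇u`. -/
structure IsWeakSolution (p q : ℝ) (Ω : Set (Rn n)) (T : ℝ)
    (a : Rn n × ℝ → ℝ) (A : Rn n × ℝ → RNn N n → RNn N n)
    (u : Rn n × ℝ → RN N) (du F : Rn n × ℝ → RNn N n) : Prop where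
  meas_u : Measurable u
  meas_du : Measurable du
  cont_L2 : ∀ t₀ ∈ Ioo (0:ℝ) T, Filter.Tendsto
      (fun t => ∫ x in Ω, ‖u (x, t) - u (x, t₀)‖ ^ 2)
      (nhdsWithin t₀ (Ioo (0:ℝ) T)) (nhds 0)
  mem_L2 : ∀ t ∈ Ioo (0:ℝ) T, IntegrableOn (fun x => ‖u (x, t)‖ ^ 2) Ω
  mem_LqW1q : IntegrableOn (fun z => ‖u z‖ ^ q + ‖du z‖ ^ q) (Ω ×ˢ Ioo 0 T)
  weak_grad : ∀ ψ : Rn n × ℝ → ℝ, ContDiff ℝ (⊤ : ℕ∞) ψ →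
      tsupport ψ ⊆ Ω ×ˢ Ioo 0 T → ∀ i : Fin N, ∀ j : Fin n,
      ∫ z in Ω ×ˢ Ioo 0 T,
        u z i * fderiv ℝ (fun x => ψ (x, z.2)) z.1 (EuclideanSpace.single j 1)
      = - ∫ z in Ω ×ˢ Ioo 0 T, du z (i, j) * ψ z
  weak_form : ∀ φ : Rn n × ℝ → RN N, ContDiff ℝ (⊤ : ℕ∞) φ →
      tsupport φ ⊆ Ω ×ˢ Ioo 0 T →
      ∫ z in Ω ×ˢ Ioo 0 T,
        (-(⟪u z, timeDeriv φ z⟫) + ⟪A z (du z), spaceGrad φ z⟫)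
      = ∫ z in Ω ×ˢ Ioo 0 T,
        ⟪(‖F z‖ ^ (p - 2) + a z * ‖F z‖ ^ (q - 2)) • F z, spaceGrad φ z⟫

/-- The standing assumptions of the paper: structure conditions, Hölder continuity of the
coefficient `a`, the relation between `p`, `q` and `α`, and a weak solution `u`. -/
structure Setting (n N : ℕ) where
  p : ℝ
  q : ℝ
  α : ℝ
  ν : ℝ
  L : ℝ
  Ca : ℝ
  Ω : Set (Rn n)
  T : ℝ
  a : Rn n × ℝ → ℝ
  A : Rn n × ℝ → RNn N n → RNn N n
  u : Rn n × ℝ → RN N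
  du : Rn n × ℝ → RNn N n
  F : Rn n × ℝ → RNn N n
  hn : 2 ≤ n
  hN : 1 ≤ N
  hp : 2 ≤ p
  hpq : p < q
  hΩ : IsOpen Ω
  hΩb : Bornology.IsBounded Ω
  hT : 0 < T
  hα : 0 < α ∧ α ≤ 1
  hq : q ≤ p + 2 * α / (n + 2)
  ha_nonneg : ∀ z, 0 ≤ a z
  ha_bdd : BddAbove (a '' (Ω ×ˢ Ioo 0 T))
  hCa : 0 ≤ Ca
  ha_x : ∀ x ∈ Ω, ∀ y ∈ Ω, ∀ t ∈ Ioo (0:ℝ) T, |a (x, t) - a (y, t)| ≤ Ca * ‖x - y‖ ^ α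
  ha_t : ∀ x ∈ Ω, ∀ t ∈ Ioo (0:ℝ) T, ∀ s ∈ Ioo (0:ℝ) T,
      |a (x, t) - a (x, s)| ≤ Ca * |t - s| ^ (α / 2)
  hν : 0 < ν
  hνL : ν ≤ L
  hA_coer : ∀ᵐ z ∂(volume.restrict (Ω ×ˢ Ioo 0 T)), ∀ ξ : RNn N n,
      ν * (‖ξ‖ ^ p + a z * ‖ξ‖ ^ q) ≤ ⟪A z ξ, ξ⟫
  hA_bdd : ∀ᵐ z ∂(volume.restrict (Ω ×ˢ Ioo 0 T)), ∀ ξ : RNn N n,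
      ‖A z ξ‖ ≤ L * (‖ξ‖ ^ (p - 1) + a z * ‖ξ‖ ^ (q - 1))
  hF : IntegrableOn (fun z => ‖F z‖ ^ p + a z * ‖F z‖ ^ q) (Ω ×ˢ Ioo 0 T)
  hsol : IsWeakSolution p q Ω T a A u du F

namespace Setting

variable {n N : ℕ} (S : Setting n N)

/-- The space-time cylinder `Ω_T = Ω × (0,T)`. -/
def ΩT : Set (Rn n × ℝ) := S.Ω ×ˢ Ioo 0 S.T

/-- `H(z, |∇u|) = |∇u|^p + a(z) |∇u|^q`. -/
def Hdu (z : Rn n × ℝ) : ℝ := ‖S.du z‖ ^ S.p + S.a z * ‖S.du z‖ ^ S.q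

/-- `H(z, |F|) = |F|^p + a(z) |F|^q`. -/
def HF (z : Rn n × ℝ) : ℝ := ‖S.F z‖ ^ S.p + S.a z * ‖S.F z‖ ^ S.q

/-- The `(p,q)`-growth function `g_{z₀}(s) = s^p + a(z₀) s^q`. -/
def g (z₀ : Rn n × ℝ) (s : ℝ) : ℝ := s ^ S.p + S.a z₀ * s ^ S.q

/-- `M₁ = ∬_{Ω_T} (|∇u|^p + a|∇u|^q + |F|^p + a|F|^q) dz`. -/
def M1 : ℝ := ∫ z in S.ΩT, (S.Hdu z + S.HF z)

/-- `M₂ = sup_{t ∈ (0,T)} ∫_Ω |u(x,t)|² dx`. -/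
def M2 : ℝ := ⨆ t ∈ Ioo (0:ℝ) S.T, ∫ x in S.Ω, ‖S.u (x, t)‖ ^ 2

/-- `γ = α p / (n+2)`. -/
def gam : ℝ := S.α * S.p / (n + 2)

/-- `M̃₁ = M₁ / (2 |B₁|)`. -/
def Mt1 : ℝ := S.M1 / (2 * (volume (Metric.ball (0 : Rn n) 1)).toReal)

/-- `K = 1 + 40 [a]_α M̃₁^{γ/p}`. -/
def Kc : ℝ := 1 + 40 * S.Ca * S.Mt1 ^ (S.gam / S.p)

/-- The covering constant `c_v = 10 K`. -/
def cv : ℝ := 10 * S.Kc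

/-- The `p`-intrinsic cylinder `Q_ρ^λ(z₀) = B_ρ(x₀) × (t₀ - λ^{2-p}ρ², t₀ + λ^{2-p}ρ²)`. -/
def Qp (z₀ : Rn n × ℝ) (l ρ : ℝ) : Set (Rn n × ℝ) :=
  Metric.ball z₀.1 ρ ×ˢ Ioo (z₀.2 - l ^ (2 - S.p) * ρ ^ 2) (z₀.2 + l ^ (2 - S.p) * ρ ^ 2)

/-- The `(p,q)`-intrinsic cylinder
`G_ρ^λ(z₀) = B_ρ(x₀) × (t₀ - λ²ρ²/g_{z₀}(λ), t₀ + λ²ρ²/g_{z₀}(λ))`. -/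
def Gpq (z₀ : Rn n × ℝ) (l ρ : ℝ) : Set (Rn n × ℝ) :=
  Metric.ball z₀.1 ρ ×ˢ
    Ioo (z₀.2 - l ^ 2 / S.g z₀ l * ρ ^ 2) (z₀.2 + l ^ 2 / S.g z₀ l * ρ ^ 2)

/-- `inf` of the coefficient `a` over a set. -/
def infa (A : Set (Rn n × ℝ)) : ℝ := sInf (S.a '' A)

/-- The super-level set `E(Λ)`. -/
def Eset (Λ : ℝ) : Set (Rn n × ℝ) := {z ∈ S.ΩT | Λ < S.Hdu z}

/-- The super-level set `Φ(Λ)`. -/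
def Φset (Λ : ℝ) : Set (Rn n × ℝ) := {z ∈ S.ΩT | Λ < S.HF z}

/-- `S(u)_{z₀;ρ}^{λ^p}`. -/
def Sp (z₀ : Rn n × ℝ) (l ρ : ℝ) : ℝ :=
  ⨆ t ∈ Ioo (z₀.2 - l ^ (2 - S.p) * ρ ^ 2) (z₀.2 + l ^ (2 - S.p) * ρ ^ 2),
    ⨍ x in Metric.ball z₀.1 ρ, ‖S.u (x, t) - ⨍ w in S.Qp z₀ l ρ, S.u w‖ ^ 2 / ρ ^ 2

/-- `S(u)_{z₀;ρ}^{g(λ)}`. -/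
def SG (z₀ : Rn n × ℝ) (l ρ : ℝ) : ℝ :=
  ⨆ t ∈ Ioo (z₀.2 - l ^ 2 / S.g z₀ l * ρ ^ 2) (z₀.2 + l ^ 2 / S.g z₀ l * ρ ^ 2),
    ⨍ x in Metric.ball z₀.1 ρ, ‖S.u (x, t) - ⨍ w in S.Gpq z₀ l ρ, S.u w‖ ^ 2 / ρ ^ 2

/-- Condition (4.3): `K λ^p ≥ a(z₀) λ^q` and the `p`-intrinsic average bound on `Q_{4ρ}^λ(z₀)`. -/
def cond43 (z₀ : Rn n × ℝ) (l ρ : ℝ) : Prop :=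
  S.a z₀ * l ^ S.q ≤ S.Kc * l ^ S.p ∧
  (⨍ z in S.Qp z₀ l (4 * ρ), (S.Hdu z + S.HF z)) < l ^ S.p

/-- Condition (4.4): `K λ^p ≤ a(z₀) λ^q`, comparability of `a` on `G_{4ρ}^λ(z₀)` and the
`(p,q)`-intrinsic average bound. -/
def cond44 (z₀ : Rn n × ℝ) (l ρ : ℝ) : Prop :=
  S.Kc * l ^ S.p ≤ S.a z₀ * l ^ S.q ∧
  (∀ z ∈ S.Gpq z₀ l (4 * ρ), S.a z₀ / 2 ≤ S.a z ∧ S.a z ≤ 2 * S.a z₀) ∧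
  (⨍ z in S.Gpq z₀ l (4 * ρ), (S.Hdu z + S.HF z)) < S.g z₀ l

/-- Condition (5.1). -/
def cond51 (z₀ : Rn n × ℝ) (l ρ : ℝ) : Prop :=
  S.a z₀ * l ^ S.q ≤ S.Kc * l ^ S.p ∧
  (∀ s ∈ Ioc ρ (S.cv * (2 * ρ)), (⨍ z in S.Qp z₀ l s, (S.Hdu z + S.HF z)) < l ^ S.p) ∧
  (⨍ z in S.Qp z₀ l ρ, (S.Hdu z + S.HF z)) = l ^ S.p

/-- Condition (5.2). -/
def cond52 (z₀ : Rn n × ℝ) (l ρ : ℝ) : Prop :=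
  S.Kc * l ^ S.p ≤ S.a z₀ * l ^ S.q ∧
  (∀ z ∈ S.Gpq z₀ l (4 * ρ), S.a z₀ / 2 ≤ S.a z ∧ S.a z ≤ 2 * S.a z₀) ∧
  (∀ s ∈ Ioc ρ (S.cv * (2 * ρ)), (⨍ z in S.Gpq z₀ l s, (S.Hdu z + S.HF z)) < S.g z₀ l) ∧
  (⨍ z in S.Gpq z₀ l ρ, (S.Hdu z + S.HF z)) = S.g z₀ l

end Setting

namespace Setting

theorem aux_cont {n N : ℕ} (S : Setting n N) : ContinuousOn S.a S.ΩT := by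
  rintro ⟨x, t⟩ hz
  have hα := S.hα.1
  have hlim : Filter.Tendsto (fun w : Rn n × ℝ =>
      S.Ca * ‖w.1 - x‖ ^ S.α + S.Ca * |w.2 - t| ^ (S.α / 2)) (nhdsWithin (x, t) S.ΩT)
      (nhds 0) := by
    have hc : Continuous (fun w : Rn n × ℝ =>
        S.Ca * ‖w.1 - x‖ ^ S.α + S.Ca * |w.2 - t| ^ (S.α / 2)) := by
      refine Continuous.add (continuous_const.mul ?_) (continuous_const.mul ?_)
      · exact Continuous.rpow_const (by fun_prop) (fun _ => Or.inr hα.le)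
      · exact Continuous.rpow_const (by fun_prop) (fun _ => Or.inr (by linarith))
    have h := (hc.tendsto (x, t)).mono_left (nhdsWithin_le_nhds (s := S.ΩT))
    have h0 : S.Ca * ‖x - x‖ ^ S.α + S.Ca * |t - t| ^ (S.α / 2) = 0 := by
      simp [Real.zero_rpow hα.ne', Real.zero_rpow (half_pos hα).ne']
    simpa only [h0] using h
  rw [ContinuousWithinAt, tendsto_iff_dist_tendsto_zero]
  refine squeeze_zero' (Filter.Eventually.of_forall fun _ => dist_nonneg) ?_ hlim
  filter_upwards [self_mem_nhdsWithin] with w hw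
  obtain ⟨y, s⟩ := w
  have h1 := S.ha_x y hw.1 x hz.1 s hw.2
  have h2 := S.ha_t x hz.1 s hw.2 t hz.2
  rw [Real.dist_eq]
  calc |S.a (y, s) - S.a (x, t)|
      ≤ |S.a (y, s) - S.a (x, s)| + |S.a (x, s) - S.a (x, t)| := abs_sub_le _ _ _
    _ ≤ _ := add_le_add h1 h2

theorem aux_open {n N : ℕ} (S : Setting n N) : IsOpen S.ΩT := S.hΩ.prod isOpen_Ioo

theorem aux_vol {n N : ℕ} (S : Setting n N) : volume S.ΩT < ∞ := by
  have hb : Bornology.IsBounded S.ΩT := S.hΩb.prod (Metric.isBounded_Ioo 0 S.T)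
  exact hb.measure_lt_top

theorem aux_int {n N : ℕ} (S : Setting n N) :
    IntegrableOn (fun w => S.Hdu w + S.HF w) S.ΩT := by
  have hm : MeasurableSet S.ΩT := S.aux_open.measurableSet
  have hp := S.hp
  have hpq := S.hpq
  refine Integrable.add ?_ S.hF
  have hdu := S.hsol.meas_du
  have hu := S.hsol.meas_u
  have hq : IntegrableOn (fun z => ‖S.du z‖ ^ S.q) S.ΩT := by
    refine Integrable.mono' S.hsol.mem_LqW1q
      (hdu.norm.pow_const S.q).aestronglyMeasurable (Filter.Eventually.of_forall fun z => ?_)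
    rw [Real.norm_of_nonneg (by positivity)]
    have : 0 ≤ ‖S.u z‖ ^ S.q := by positivity
    linarith
  have h1 : IntegrableOn (fun _ : Rn n × ℝ => (1 : ℝ)) S.ΩT :=
    integrableOn_const S.aux_vol.ne
  refine Integrable.add ?_ ?_
  · refine Integrable.mono' (h1.add hq)
      (hdu.norm.pow_const S.p).aestronglyMeasurable (Filter.Eventually.of_forall fun z => ?_)
    rw [Real.norm_of_nonneg (by positivity)]
    simp only [Pi.add_apply]
    have h0 : 0 ≤ ‖S.du z‖ ^ S.q := by positivity
    rcases le_total ‖S.du z‖ 1 with h | h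
    · have := Real.rpow_le_one (norm_nonneg _) h (by linarith : 0 ≤ S.p)
      linarith
    · have := Real.rpow_le_rpow_of_exponent_le h hpq.le
      linarith
  · obtain ⟨C, hC⟩ := S.ha_bdd
    refine Integrable.bdd_mul (c := C) hq (S.aux_cont.aestronglyMeasurable hm) ?_
    refine (ae_restrict_iff' hm).2 (Filter.Eventually.of_forall fun z hz => ?_)
    rw [Real.norm_of_nonneg (S.ha_nonneg z)]
    exact hC ⟨z, hz, rfl⟩

theorem aux_nonneg {n N : ℕ} (S : Setting n N) (w : Rn n × ℝ) : 0 ≤ S.Hdu w + S.HF w := by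
  have := S.ha_nonneg w
  unfold Hdu HF
  positivity

theorem aux_volQ {n N : ℕ} (S : Setting n N) (z : Rn n × ℝ) (l ρ : ℝ) (hl : 1 ≤ l)
    (hρ : 0 < ρ) : volume.real (S.Qp z l ρ) =
      ρ ^ n * (volume (Metric.ball (0 : Rn n) 1)).toReal * (2 * (l ^ (2 - S.p) * ρ ^ 2)) := by
  have hl0 : 0 < l := by linarith
  unfold Qp
  rw [Measure.real, Measure.volume_eq_prod, Measure.prod_prod, ENNReal.toReal_mul,
    Measure.addHaar_ball_of_pos volume z.1 hρ, Real.volume_Ioo, ENNReal.toReal_mul,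
    ENNReal.toReal_ofReal (by positivity), ENNReal.toReal_ofReal]
  · simp only [finrank_euclideanSpace, Fintype.card_fin]
    ring
  · have : 0 < l ^ (2 - S.p) * ρ ^ 2 := by positivity
    linarith

theorem aux_key {n N : ℕ} (S : Setting n N) (z : Rn n × ℝ) (l ρ : ℝ) (hl : 1 ≤ l)
    (hρ : 0 < ρ) (hQ : S.Qp z l ρ ⊆ S.ΩT)
    (hav : (⨍ w in S.Qp z l ρ, (S.Hdu w + S.HF w)) = l ^ S.p) :
    ρ ^ (n + 2) * l ^ 2 ≤ S.Mt1 := by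
  have hl0 : 0 < l := by linarith
  have hB : 0 < (volume (Metric.ball (0 : Rn n) 1)).toReal :=
    ENNReal.toReal_pos (Metric.measure_ball_pos _ _ one_pos).ne' measure_ball_lt_top.ne
  have hle : ∫ w in S.Qp z l ρ, (S.Hdu w + S.HF w) ≤ S.M1 :=
    setIntegral_mono_set S.aux_int (Filter.Eventually.of_forall S.aux_nonneg)
      (Filter.Eventually.of_forall hQ)
  have hv := S.aux_volQ z l ρ hl hρ
  have hvpos : 0 < volume.real (S.Qp z l ρ) := by rw [hv]; positivity
  rw [setAverage_eq, smul_eq_mul, inv_mul_eq_iff_eq_mul₀ hvpos.ne', hv] at hav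
  have hll : l ^ (2 - S.p) * l ^ S.p = l ^ 2 := by
    rw [← Real.rpow_add hl0, ← Real.rpow_natCast]; norm_num
  unfold Mt1
  rw [le_div_iff₀ (by positivity)]
  calc _ = ρ ^ n * (volume (Metric.ball (0 : Rn n) 1)).toReal *
        (2 * ((l ^ (2 - S.p) * l ^ S.p) * ρ ^ 2)) := by rw [hll]; ring
    _ = ∫ w in S.Qp z l ρ, (S.Hdu w + S.HF w) := by rw [hav]; ring
    _ ≤ _ := hle

end Setting

/-- **Section 6, Case 3**: the alternative `K λ^p ≤ a(𝔷) λ^q` together with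
`a(𝔷) ≤ 2 [a]_α (10ρ)^α` is impossible at a stopping point. -/
theorem case3_impossible {n N : ℕ} (S : Setting n N) :
    ∀ z : Rn n × ℝ, ∀ l ρ : ℝ, 1 ≤ l → 0 < ρ → S.Qp z l ρ ⊆ S.ΩT →
      (⨍ w in S.Qp z l ρ, (S.Hdu w + S.HF w)) = l ^ S.p →
      S.a z ≤ 2 * S.Ca * (10 * ρ) ^ S.α →
      S.a z * l ^ S.q < S.Kc * l ^ S.p := by
  intro z l ρ hl hρ hQ hav ha
  have hl0 : 0 < l := by linarith
  have hkey := S.aux_key z l ρ hl hρ hQ hav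
  have hα := S.hα
  have hp := S.hp
  have hCa := S.hCa
  have hn2 : (0 : ℝ) < (n : ℝ) + 2 := by positivity
  have hg : S.gam / S.p = S.α / (n + 2) := by
    unfold Setting.gam
    field_simp
  have hM : 0 ≤ S.Mt1 := le_trans (by positivity) hkey
  have h1 : ρ ^ S.α * l ^ (2 * S.α / (n + 2)) ≤ S.Mt1 ^ (S.α / (n + 2)) := by
    have h := Real.rpow_le_rpow (by positivity) hkey
      (by have := hα.1; positivity : 0 ≤ S.α / ((n : ℝ) + 2))
    rw [Real.mul_rpow (by positivity) (by positivity), ← Real.rpow_natCast, ← Real.rpow_natCast,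
      ← Real.rpow_mul hρ.le, ← Real.rpow_mul hl0.le] at h
    have e1 : (((n + 2 : ℕ) : ℝ)) * (S.α / (n + 2)) = S.α := by
      push_cast
      field_simp
    have e2 : (((2 : ℕ) : ℝ)) * (S.α / (n + 2)) = 2 * S.α / (n + 2) := by
      push_cast
      ring
    rwa [e1, e2] at h
  have h2 : l ^ S.q ≤ l ^ (2 * S.α / (n + 2)) * l ^ S.p := by
    rw [← Real.rpow_add hl0]
    exact Real.rpow_le_rpow_of_exponent_le hl (by linarith [S.hq])
  have h10 : (10 * ρ) ^ S.α ≤ 10 * ρ ^ S.α := by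
    rw [Real.mul_rpow (by norm_num) hρ.le]
    have : (10 : ℝ) ^ S.α ≤ 10 := by
      simpa using Real.rpow_le_rpow_of_exponent_le (by norm_num : (1 : ℝ) ≤ 10) hα.2
    gcongr
  have hlp : 0 < l ^ S.p := by positivity
  have hX : 0 ≤ S.Ca * S.Mt1 ^ (S.α / (n + 2)) * l ^ S.p := by positivity
  have hfin : S.a z * l ^ S.q ≤ 20 * (S.Ca * S.Mt1 ^ (S.α / (n + 2)) * l ^ S.p) := by
    calc S.a z * l ^ S.q ≤ (2 * S.Ca * (10 * ρ ^ S.α)) * (l ^ (2 * S.α / (n + 2)) * l ^ S.p) := by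
          refine mul_le_mul (ha.trans ?_) h2 (by positivity) (by positivity)
          gcongr
      _ = 20 * (S.Ca * (ρ ^ S.α * l ^ (2 * S.α / (n + 2))) * l ^ S.p) := by ring
      _ ≤ _ := by gcongr
  unfold Setting.Kc
  rw [hg]
  nlinarith

end DoublePhase
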